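/- For every positive integer h and every integer m with 0 ≤ m < 2^h, there exists a finite sequence u_1, …, u_{h'} of pairwise disjoint dyadic intervals in [0,1) with h' ≤ 2h such that: (a) each u_i is a dyadic interval of some depth ℓ_i ≤ h; (b) the union u_1 ∪ ⋯ ∪ u_{h'} equals [0, m·2^{-h}); (c) each u_i has a right neighbor at its depth, i.e., writing u_i = [a_i, a_i + 2^{-ℓ_i}), we have a_i + 2·2^{-ℓ_i} ≤ 1; and (d) for each depth ℓ, at most two indices i satisfy ℓ_i = ℓ. -/

import Mathlib

/-!
Truncating the binary expansion of `x ∈ [0, 1)` after `k` digits gives an increasing sequence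
starting at `0`. A digit `0` leaves the truncation unchanged, while a digit `1` of weight
`2^{-(k+1)}` advances it by that weight, sweeping out the left half of a dyadic interval of depth
`k`, whose right half is then the required right neighbor. Thus each depth contributes at most one
interval, and for `x = m / 2^h` the truncation after `h` digits is `x` itself.
-/

/-- The dyadic interval of depth `j` and index `m`: `[m·2^{-j}, (m+1)·2^{-j}) ⊂ [0,1)`. -/
def dyadic (j m : ℕ) : Set ℝ :=
  Set.Ico ((m : ℝ) / 2 ^ j) (((m : ℝ) + 1) / 2 ^ j)

theorem biUnion_Ico_succ_of_monotone {α : Type*} [LinearOrder α] {f : ℕ → α} (hf : Monotone f)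
    (n : ℕ) : ⋃ k ∈ Finset.range n, Set.Ico (f k) (f (k + 1)) = Set.Ico (f 0) (f n) := by
  refine (Set.iUnion₂_subset fun k hk => ?_).antisymm (Ico_subset_biUnion_Ico n f)
  exact Set.Ico_subset_Ico (hf k.zero_le) (hf (Finset.mem_range.mp hk))

theorem iUnion_orderEmbOfFin {α β : Type*} [LinearOrder α] (s : Finset α) (g : α → Set β) :
    ⋃ i, g (s.orderEmbOfFin rfl i) = ⋃ a ∈ s, g a := by
  rw [← Set.biUnion_range (f := s.orderEmbOfFin rfl), Finset.range_orderEmbOfFin]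
  simp only [Finset.mem_coe]

/-- The truncation of the binary expansion of `x` after `k` digits: for `0 ≤ x`, the largest
multiple of `2^{-k}` that is at most `x`. Its values at consecutive `k` are the endpoints of the
intervals of the cover. -/
noncomputable def dyadicFloor (x : ℝ) (k : ℕ) : ℝ :=
  ⌊2 ^ k * x⌋₊ / 2 ^ k

/-- The positions below `n` of the digits `1` in the binary expansion of the fractional part of
`x ≥ 0`. Positions count from `0`, so that the digit in position `k` has weight `2^{-(k+1)}`. -/
noncomputable def oneDigits (x : ℝ) (n : ℕ) : Finset ℕ :=
  {k ∈ Finset.range n | Odd ⌊2 ^ (k + 1) * x⌋₊}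

theorem mem_oneDigits {x : ℝ} {n k : ℕ} :
    k ∈ oneDigits x n ↔ k < n ∧ Odd ⌊2 ^ (k + 1) * x⌋₊ := by
  rw [oneDigits, Finset.mem_filter, Finset.mem_range]

theorem card_oneDigits_le (x : ℝ) (n : ℕ) : (oneDigits x n).card ≤ n :=
  (Finset.card_filter_le _ _).trans_eq (Finset.card_range n)

theorem two_mul_floor_add_mod_two (x : ℝ) (k : ℕ) :
    2 * ⌊2 ^ k * x⌋₊ + ⌊2 ^ (k + 1) * x⌋₊ % 2 = ⌊2 ^ (k + 1) * x⌋₊ := by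
  have floor_half : ⌊2 ^ (k + 1) * x⌋₊ / 2 = ⌊2 ^ k * x⌋₊ := by
    rw [← Nat.floor_div_ofNat, pow_succ', mul_assoc, mul_div_cancel_left₀ _ two_ne_zero]
  rw [← floor_half, Nat.div_add_mod]

theorem floor_two_pow_mul_lt {x : ℝ} (hx : x < 1) (k : ℕ) : ⌊2 ^ k * x⌋₊ < 2 ^ k := by
  refine (Nat.floor_lt' (by positivity)).mpr ?_
  rw [Nat.cast_pow, Nat.cast_ofNat]
  exact mul_lt_of_lt_one_right (by positivity) hx

theorem dyadicFloor_zero {x : ℝ} (hx : x < 1) : dyadicFloor x 0 = 0 := by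
  simpa [dyadicFloor] using hx

theorem dyadicFloor_natCast_div_two_pow (m n : ℕ) :
    dyadicFloor (m / 2 ^ n) n = m / 2 ^ n := by
  rw [dyadicFloor, mul_div_cancel₀ _ (by positivity), Nat.floor_natCast]

theorem dyadicFloor_succ (x : ℝ) (k : ℕ) :
    dyadicFloor x (k + 1) =
      dyadicFloor x k + ((⌊2 ^ (k + 1) * x⌋₊ % 2 : ℕ) : ℝ) / 2 ^ (k + 1) := by
  have digit_recursion : 2 * (⌊2 ^ k * x⌋₊ : ℝ) + ((⌊2 ^ (k + 1) * x⌋₊ % 2 : ℕ) : ℝ) =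
      ⌊2 ^ (k + 1) * x⌋₊ := by
    exact_mod_cast two_mul_floor_add_mod_two x k
  rw [dyadicFloor, dyadicFloor, ← digit_recursion, add_div, pow_succ',
    mul_div_mul_left _ _ two_ne_zero]

theorem monotone_dyadicFloor (x : ℝ) : Monotone (dyadicFloor x) :=
  monotone_nat_of_le_succ fun k => by
    rw [dyadicFloor_succ]
    exact le_add_of_nonneg_right (by positivity)

theorem Ico_dyadicFloor_of_odd {x : ℝ} {k : ℕ} (hk : Odd ⌊2 ^ (k + 1) * x⌋₊) :
    Set.Ico (dyadicFloor x k) (dyadicFloor x (k + 1)) = dyadic (k + 1) (2 * ⌊2 ^ k * x⌋₊) := by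
  have left_endpoint : dyadicFloor x k = ((2 * ⌊2 ^ k * x⌋₊ : ℕ) : ℝ) / 2 ^ (k + 1) := by
    rw [dyadicFloor, pow_succ', Nat.cast_mul, Nat.cast_ofNat, mul_div_mul_left _ _ two_ne_zero]
  rw [dyadicFloor_succ, Nat.odd_iff.mp hk, left_endpoint, ← add_div, Nat.cast_one, dyadic]

theorem Ico_dyadicFloor_of_not_odd {x : ℝ} {k : ℕ} (hk : ¬ Odd ⌊2 ^ (k + 1) * x⌋₊) :
    Set.Ico (dyadicFloor x k) (dyadicFloor x (k + 1)) = ∅ := by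
  rw [dyadicFloor_succ, Nat.even_iff.mp (Nat.not_odd_iff_even.mp hk)]
  simp

theorem biUnion_dyadic_oneDigits {x : ℝ} (hx : x < 1) (n : ℕ) :
    ⋃ k ∈ oneDigits x n, dyadic (k + 1) (2 * ⌊2 ^ k * x⌋₊) = Set.Ico 0 (dyadicFloor x n) := by
  rw [← dyadicFloor_zero hx, ← biUnion_Ico_succ_of_monotone (monotone_dyadicFloor x) n]
  ext y
  simp only [mem_oneDigits, Finset.mem_range, Set.mem_iUnion, exists_prop, and_assoc]
  refine exists_congr fun k => and_congr_right fun _ => ?_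
  by_cases hk : Odd ⌊2 ^ (k + 1) * x⌋₊
  · simp only [hk, true_and, Ico_dyadicFloor_of_odd hk]
  · simp only [hk, false_and, Ico_dyadicFloor_of_not_odd hk, Set.mem_empty_iff_false]

theorem pairwiseDisjoint_dyadic_oneDigits (x : ℝ) (n : ℕ) :
    (oneDigits x n : Set ℕ).PairwiseDisjoint fun k => dyadic (k + 1) (2 * ⌊2 ^ k * x⌋₊) := by
  intro i hi j hj hij
  have hi_odd := (mem_oneDigits.mp hi).2
  have hj_odd := (mem_oneDigits.mp hj).2
  simpa only [Function.onFun, Order.succ_eq_add_one, Ico_dyadicFloor_of_odd hi_odd,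
    Ico_dyadicFloor_of_odd hj_odd] using (monotone_dyadicFloor x).pairwise_disjoint_on_Ico_succ hij

/-- Balanced prefix cover: for every `0 ≤ m < 2^h`, the interval `[0, m·2^{-h})` is a disjoint
union of at most `2h` dyadic intervals of depth at most `h`, each having a right neighbor at
its depth, with at most two intervals per depth. -/
theorem balanced_prefix_cover :
    ∀ h : ℕ, 0 < h → ∀ m : ℕ, m < 2 ^ h →
      ∃ h' : ℕ, h' ≤ 2 * h ∧
        ∃ ℓ idx : Fin h' → ℕ,
          (∀ i, ℓ i ≤ h) ∧
          (∀ i, idx i + 2 ≤ 2 ^ (ℓ i)) ∧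
          (∀ i i' : Fin h', i ≠ i' → Disjoint (dyadic (ℓ i) (idx i)) (dyadic (ℓ i') (idx i'))) ∧
          (⋃ i, dyadic (ℓ i) (idx i)) = Set.Ico (0 : ℝ) ((m : ℝ) / 2 ^ h) ∧
          (∀ ℓ₀ : ℕ, (Finset.univ.filter fun i : Fin h' => ℓ i = ℓ₀).card ≤ 2) := by
  intro h _ m hm
  let x : ℝ := m / 2 ^ h
  have hx_lt : x < 1 := (div_lt_one (by positivity)).mpr (by exact_mod_cast hm)
  have card_le := card_oneDigits_le x h
  let e := (oneDigits x h).orderEmbOfFin rfl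
  have e_mem (i) : e i ∈ oneDigits x h := Finset.orderEmbOfFin_mem _ rfl i
  refine ⟨(oneDigits x h).card, by lia, fun i => e i + 1, fun i => 2 * ⌊2 ^ e i * x⌋₊,
    fun i => ?depth_le, fun i => ?right_neighbor, fun i j hij => ?disjoint, ?union,
    fun d => ?depth_card⟩
  case depth_le => exact (mem_oneDigits.mp (e_mem i)).1
  case right_neighbor =>
    have floor_lt := floor_two_pow_mul_lt hx_lt (e i)
    lia
  case disjoint =>
    exact pairwiseDisjoint_dyadic_oneDigits x h (e_mem i) (e_mem j) (e.injective.ne hij)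
  case union =>
    rw [← dyadicFloor_natCast_div_two_pow, ← biUnion_dyadic_oneDigits hx_lt]
    exact iUnion_orderEmbOfFin _ fun k => dyadic (k + 1) (2 * ⌊2 ^ k * x⌋₊)
  case depth_card =>
    have depth_inj : Function.Injective fun i => e i + 1 := (add_left_injective 1).comp e.injective
    refine (Finset.card_le_one.mpr fun i hi j hj => depth_inj ?_).trans one_le_two
    exact (Finset.mem_filter.mp hi).2.trans (Finset.mem_filter.mp hj).2.symm
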